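/- Let m and p be positive integers and set l = 4mp+1, t = 4mp−2p+1, p' = 2mp. Let s and k be integers with 0 ≤ s ≤ 2m−1 and sp+1 ≤ k ≤ (s+1)p. Then σ_{i_k} = (−1)^{s+1}; in particular σ_{i_k} = −1 on the first interval 1 ≤ k ≤ p, and the value alternates between −1 and 1 on the successive intervals of length p. -/

import Mathlib

open Finset

noncomputable section

/-- The q-Pochhammer symbol `(a; q)_n = ∏_{k=0}^{n-1} (1 - a q^k)`. -/
def qPoch (a q : ℂ) (n : ℕ) : ℂ := ∏ k ∈ Finset.range n, (1 - a * q ^ k)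

/-- The Gaussian binomial coefficient `[n; k]_q` as a polynomial in `q` over `ℤ`,
defined by the q-Pascal rule `[n; k] = [n-1; k-1] + q^k [n-1; k]`.  It is the
polynomial equal to `(q;q)_n / ((q;q)_{n-k} (q;q)_k)`. -/
def gaussPoly : ℕ → ℕ → Polynomial ℤ
  | _, 0 => 1
  | 0, _ + 1 => 0
  | n + 1, k + 1 => gaussPoly n k + Polynomial.X ^ (k + 1) * gaussPoly n (k + 1)

/-- The Gaussian binomial coefficient `[n; k]_q` evaluated at `q : ℂ`. -/
def gbin (q : ℂ) (n k : ℕ) : ℂ := Polynomial.aeval q (gaussPoly n k)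

/-- `σ_j = (-1)^⌊(2j-1)t/l⌋`. -/
def sigmaT (l t j : ℕ) : ℤ := (-1) ^ ((2 * j - 1) * t / l)

/-- `r(j)`: the unique integer with `r(j) ≡ (2j-1)t (mod 2l)` and `-l < r(j) < l`. -/
def rT (l t j : ℕ) : ℤ :=
  if (((2 * j - 1) * t % (2 * l) : ℕ) : ℤ) < (l : ℤ) then (((2 * j - 1) * t % (2 * l) : ℕ) : ℤ)
  else (((2 * j - 1) * t % (2 * l) : ℕ) : ℤ) - 2 * (l : ℤ)

/-- `r'(j) = (|r(j)| + 1)/2`. -/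
def rpT (l t j : ℕ) : ℕ := ((rT l t j).natAbs + 1) / 2

open Classical in
/-- `i_k`: the unique `j ∈ {1, …, (l-1)/2}` with `r'(j) = k`. -/
def iT (l t k : ℕ) : ℕ :=
  if h : ∃ j, j ∈ Finset.Icc 1 ((l - 1) / 2) ∧ rpT l t j = k then h.choose else 0

/-- `ε_{i,j,m}`: `1` if `j ≡ -i, -i-1 (mod 2m)`, `-1` if `j ≡ i, i-1 (mod 2m)`,
`0` otherwise (and `0` when `m ∣ i`, a case excluded in all uses). -/
def epsLO (m i j : ℕ) : ℤ :=
  if m ∣ i then 0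
  else if 2 * m ∣ (i + j) ∨ 2 * m ∣ (i + j + 1) then 1
  else if (2 * (m : ℤ)) ∣ ((j : ℤ) - (i : ℤ)) ∨ (2 * (m : ℤ)) ∣ ((j : ℤ) - (i : ℤ) + 1) then -1
  else 0

/-- `Δ_{i,j,m}`: `1` if `j ≡ -i, -i+1 (mod 2m)`, `-1` if `j ≡ i, i+1 (mod 2m)`,
`0` otherwise (and `0` when `m ∣ i`, a case excluded in all uses). -/
def deltaLO (m i j : ℕ) : ℤ :=
  if m ∣ i then 0
  else if 2 * m ∣ (i + j) ∨ 2 * m ∣ (i + j - 1) then 1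
  else if (2 * (m : ℤ)) ∣ ((j : ℤ) - (i : ℤ)) ∨ (2 * (m : ℤ)) ∣ ((j : ℤ) - (i : ℤ) - 1) then -1
  else 0

/-- `γ_{i,m} = 1` if `i ≡ 1, …, m-1 (mod 2m)` and `-1` otherwise. -/
def gamLO (m i : ℕ) : ℤ :=
  if 1 ≤ i % (2 * m) ∧ i % (2 * m) ≤ m - 1 then 1 else -1

/-- `β_{i,m} = 1` if `i ≡ 1, …, m-1 (mod 2m)`, `-1` if `i ≡ m+1, …, 2m-1 (mod 2m)`,
and `0` if `m ∣ i`. -/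
def betLO (m i : ℕ) : ℤ :=
  if 1 ≤ i % (2 * m) ∧ i % (2 * m) ≤ m - 1 then 1
  else if m + 1 ≤ i % (2 * m) ∧ i % (2 * m) ≤ 2 * m - 1 then -1
  else 0

/-- Extend a tuple `f : Fin P → Fin N` to `n : ℕ → ℕ` with `n i = f (i-1)` for
`1 ≤ i ≤ P` and `n i = 0` otherwise (in particular `n 0 = 0`). -/
def extTup (P N : ℕ) (f : Fin P → Fin N) : ℕ → ℕ :=
  fun i => if h : 1 ≤ i ∧ i ≤ P then (f ⟨i - 1, by omega⟩ : ℕ) else 0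

/-- Takata's exponent `a(n)` (an integer; every integer division below is exact). -/
def aT (l t : ℕ) (n : ℕ → ℕ) : ℤ :=
  -(∑ j ∈ Icc 1 ((l - 1) / 2), (∑ k ∈ Icc (rpT l t j) ((l - 1) / 2),
      (sigmaT l t (iT l t k) + sigmaT l t (iT l t ((l - 1) / 2 + 1 - k))) / 2) *
      ((n j : ℤ) - (n (j - 1) : ℤ)))
  - ∑ j ∈ Icc 1 ((l - 1) / 2 - 1), ((sigmaT l t (j + 1) + sigmaT l t ((l - 1) / 2 + 1 - j)) / 2) * (n j : ℤ)
  - ((sigmaT l t ((l - 1) / 2) + 1) / 2) * (n ((l - 1) / 2) : ℤ)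
  - ∑ j ∈ Icc 1 ((l - 1) / 2), sigmaT l t j

/-- Takata's exponent `b₁(n)` (an integer; every integer division below is exact
whenever the factor it multiplies is nonzero). -/
def b1T (l t : ℕ) (n : ℕ → ℕ) : ℤ :=
  -aT l t n
  + ∑ k ∈ Icc 1 ((l - t) / 2), ((1 - sigmaT l t (iT l t k)) / 2) * (n (iT l t k - 1) : ℤ)
  - ∑ k ∈ Icc ((l - t) / 2 + 1) ((l - 1) / 2), (n (iT l t k - 1) : ℤ)
  + ∑ k ∈ Icc ((l - t) / 2 + 1) ((l - 1) / 2), ((1 + sigmaT l t (iT l t k)) / 2) * (n (iT l t k) : ℤ)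
  - (1 + sigmaT l t ((l - 1) / 2)) * (n ((l - 1) / 2) : ℤ)
  + ∑ j ∈ Icc 1 ((l - 1) / 2 - 1), ((sigmaT l t (j + 1) - sigmaT l t j) / 2) * (n j : ℤ)
  - ∑ k ∈ Icc 1 ((l - 1) / 2 - 1), ∑ k' ∈ Icc (k + 1) ((l - 1) / 2),
      ((1 + Int.sign ((iT l t k : ℤ) - (iT l t k' : ℤ))) / 2) *
        ((sigmaT l t (iT l t k) - sigmaT l t (iT l t k')) / 2) *
        ((n (iT l t k) : ℤ) - (n (iT l t k - 1) : ℤ)) *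
        ((n (iT l t k') : ℤ) - (n (iT l t k' - 1) : ℤ))
  + ∑ j ∈ Icc 1 ((l - 1) / 2), sigmaT l t j *
      (∑ k ∈ Icc 1 (rpT l t j), ((n (iT l t k) : ℤ) - (n (iT l t k - 1) : ℤ))) * (n (j - 1) : ℤ)

/-- Takata's exponent `b₂(n)`. -/
def b2T (l t : ℕ) (n : ℕ → ℕ) : ℤ :=
  if l < 2 * t then
    ∑ k ∈ Icc ((l - t) / 2 + 1) ((t - 1) / 2),
      ((1 + sigmaT l t (iT l t k)) / 2) * (n (iT l t k - 1) : ℤ)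
  else
    -∑ k ∈ Icc ((t + 1) / 2 + 1) ((l - t) / 2),
      ((1 + sigmaT l t (iT l t k)) / 2) * (n (iT l t k - 1) : ℤ)

/-- Takata's `κ(p')`. -/
def kapT (l t N : ℕ) (n : ℕ → ℕ) : ℤ :=
  if sigmaT l t ((l - 1) / 2) = -1 then -(N : ℤ) * (n ((l - 1) / 2) : ℤ) else 0

/-- Takata's `τ(j)`. -/
def tauT (l t : ℕ) (q : ℂ) (n : ℕ → ℕ) (j : ℕ) : ℂ :=
  if sigmaT l t j = -1 then (-1 : ℂ) ^ (n j - n (j - 1))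
  else q ^ ((((n j : ℤ) - (n (j - 1) : ℤ)) * (((n j : ℤ) - (n (j - 1) : ℤ)) + 1)) / 2)

/-- Takata's `X(n)`. -/
def XT (l t N : ℕ) (q : ℂ) (n : ℕ → ℕ) : ℂ :=
  (-1 : ℂ) ^ (n ((l - 1) / 2)) * q ^ kapT l t N n *
    (qPoch q q (N - 1) * qPoch q q (n ((l - 1) / 2)) / qPoch q q (N - n ((l - 1) / 2) - 1)) *
    ∏ j ∈ Icc 1 ((l - 1) / 2), tauT l t q n j / qPoch q q (n j - n (j - 1))

/-!
The pair `(σ_j, r'(j))` records the signed odd residue of `(2j-1)t` modulo `2l`: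
`(2j-1)t ≡ σ_j(2r'(j)-1)`. If `tu ≡ 1 (mod 2l)`, multiplying this congruence by `uσ_j` gives the
same congruence for `u` with the roles of `j` and `r'(j)` exchanged. Hence the bijections `r'`
attached to `t` and `u` are mutually inverse, and `σ_(i_k)` for `t` is `σ_k` for `u`.
For `l = 4mp+1` and `t = l-2p` one takes `u = l+2m`, and `σ_k` is then governed by
`⌊2m(2k-1)/l⌋`, which equals `s` on the `s`-th interval of length `p`.
-/

lemma neg_one_pow_div_mul_abs_bmod {l : ℕ} (hl : 0 < l) (a : ℕ) :
    (-1) ^ (a / l) * |(a : ℤ).bmod (2 * l)| = (a : ℤ).bmod (2 * l) := by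
  have hdiv : a / l = a % (2 * l) / l + 2 * (a / (2 * l)) := by
    conv_lhs => rw [← Nat.mod_add_div a (2 * l), mul_comm 2 l, mul_assoc,
      Nat.add_mul_div_left _ _ hl]
    rw [mul_comm 2 l]
  have hlt : a % (2 * l) < 2 * l := Nat.mod_lt _ (by omega)
  rw [hdiv, pow_add, pow_mul, neg_one_sq, one_pow, mul_one, Int.bmod_def, ← Int.natCast_mod]
  generalize a % (2 * l) = r at hlt
  rcases lt_or_ge r l with hr | hr
  · rw [if_pos (by omega), Nat.div_eq_of_lt hr, pow_zero, one_mul, Nat.abs_cast]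
  · rw [if_neg (by omega), Nat.div_eq_of_lt_le (k := 1) (by omega) (by omega),
      abs_of_neg (by omega)]
    ring

section

variable {l t u j k : ℕ}

lemma rT_eq_bmod (l t j : ℕ) : rT l t j = (((2 * j - 1) * t : ℕ) : ℤ).bmod (2 * l) := by
  rw [rT, Int.bmod_def, ← Int.natCast_mod]
  congr 1
  rw [eq_iff_iff]
  omega

lemma modEq_rT (hj : 1 ≤ j) : ((2 * j - 1) * t : ℤ) ≡ rT l t j [ZMOD 2 * l] := by
  have hcast : ((2 * j - 1) * t : ℤ) = ((2 * j - 1) * t : ℕ) := by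
    push_cast [Nat.cast_sub (show 1 ≤ 2 * j by omega)]
    rfl
  rw [rT_eq_bmod, hcast]
  exact_mod_cast Int.bmod_emod.symm

lemma rT_eq_of_modEq {r : ℤ} (hj : 1 ≤ j) (hlo : -l ≤ r) (hhi : r < l)
    (h : ((2 * j - 1) * t : ℤ) ≡ r [ZMOD 2 * l]) : rT l t j = r := by
  rw [rT_eq_bmod, Int.bmod_eq_iff (by omega)]
  push_cast [Nat.cast_sub (show 1 ≤ 2 * j by omega)]
  exact ⟨by omega, by omega, h.dvd⟩

lemma abs_rT_le (hl : 0 < l) (t j : ℕ) : |rT l t j| ≤ l := by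
  have hlo := Int.le_bmod (x := (((2 * j - 1) * t : ℕ) : ℤ)) (m := 2 * l) (by omega)
  have hhi := Int.bmod_lt (x := (((2 * j - 1) * t : ℕ) : ℤ)) (m := 2 * l) (by omega)
  rw [← rT_eq_bmod] at hlo hhi
  rw [abs_le]
  omega

lemma abs_rT_ne (ht : t.Coprime l) (hj : 1 ≤ j) (hjl : 2 * j ≤ l) : |rT l t j| ≠ l := by
  intro heq
  have hdvd : (l : ℤ) ∣ (2 * j - 1) * t :=
    (((modEq_rT hj).of_mul_left 2).dvd_iff).2 ((dvd_abs _ _).1 heq.symm.dvd)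
  have hdvd' : (l : ℤ) ∣ 2 * j - 1 := ht.symm.isCoprime.dvd_of_dvd_mul_right hdvd
  have hle := Int.le_of_dvd (by omega) hdvd'
  omega

lemma odd_rT (ht : Odd t) (hj : 1 ≤ j) : Odd (rT l t j) := by
  have hmod : ((2 * j - 1) * t : ℤ) ≡ rT l t j [ZMOD 2] := (modEq_rT hj).of_mul_right _
  have hprod : Odd ((2 * j - 1) * t : ℤ) := ((even_two_mul _).sub_odd odd_one).mul ht.natCast
  rwa [Int.odd_iff, ← hmod, ← Int.odd_iff]

lemma two_mul_rpT_sub_one (ht : Odd t) (hj : 1 ≤ j) :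
    (2 * rpT l t j - 1 : ℤ) = |rT l t j| := by
  obtain ⟨c, hc⟩ := odd_rT (l := l) ht hj
  rw [rpT, hc, ← Int.natCast_natAbs]
  omega

lemma rpT_mem_Icc (hl : Odd l) (ht : t.Coprime (2 * l)) (hj : j ∈ Icc 1 ((l - 1) / 2)) :
    rpT l t j ∈ Icc 1 ((l - 1) / 2) := by
  obtain ⟨hj1, hjl⟩ := mem_Icc.1 hj
  have htwo := two_mul_rpT_sub_one (l := l) (Nat.coprime_two_right.1 ht.coprime_mul_right_right) hj1
  have hle := abs_rT_le hl.pos t j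
  have hne := abs_rT_ne ht.coprime_mul_left_right hj1 (by omega)
  have hnonneg := abs_nonneg (rT l t j)
  obtain ⟨c, rfl⟩ := hl
  rw [mem_Icc]
  omega

lemma isUnit_sigmaT (l t j : ℕ) : IsUnit (sigmaT l t j) :=
  isUnit_one.neg.pow _

lemma sigmaT_mul_abs_rT (hl : 0 < l) (t j : ℕ) : sigmaT l t j * |rT l t j| = rT l t j := by
  rw [sigmaT, rT_eq_bmod, neg_one_pow_div_mul_abs_bmod hl]

lemma sigmaT_add_left (hl : 0 < l) (t : ℕ) (hj : 1 ≤ j) :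
    sigmaT l (l + t) j = -sigmaT l t j := by
  have hodd : Odd (2 * j - 1) := ⟨j - 1, by omega⟩
  rw [sigmaT, sigmaT, mul_add, mul_comm _ l, Nat.mul_add_div hl, pow_add, hodd.neg_one_pow,
    neg_one_mul]

lemma modEq_sigmaT_mul_rpT (hl : 0 < l) (ht : Odd t) (hj : 1 ≤ j) :
    ((2 * j - 1) * t : ℤ) ≡ sigmaT l t j * (2 * rpT l t j - 1) [ZMOD 2 * l] := by
  rw [two_mul_rpT_sub_one ht hj, sigmaT_mul_abs_rT hl]
  exact modEq_rT hj

lemma rpT_eq_of_modEq {ε : ℤ} (hε : IsUnit ε) (hj : 1 ≤ j) (hk : 1 ≤ k) (hkl : 2 * k ≤ l)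
    (h : ((2 * j - 1) * t : ℤ) ≡ ε * (2 * k - 1) [ZMOD 2 * l]) : rpT l t j = k := by
  rcases Int.isUnit_iff.1 hε with rfl | rfl <;>
  · rw [rpT, rT_eq_of_modEq hj (by omega) (by omega) h]
    omega

lemma sigmaT_eq_of_modEq {ε : ℤ} (hε : IsUnit ε) (hj : 1 ≤ j) (hk : 1 ≤ k) (hkl : 2 * k ≤ l)
    (h : ((2 * j - 1) * t : ℤ) ≡ ε * (2 * k - 1) [ZMOD 2 * l]) : sigmaT l t j = ε := by
  have hsigma := sigmaT_mul_abs_rT (l := l) (by omega) t j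
  have hpos : (0 : ℤ) < 2 * k - 1 := by omega
  rcases Int.isUnit_iff.1 hε with rfl | rfl <;>
  · rw [rT_eq_of_modEq hj (by omega) (by omega) h, abs_mul, abs_of_pos hpos] at hsigma
    exact mul_right_cancel₀ hpos.ne' (by simpa using hsigma)

lemma rpT_mul_modEq (hl : 0 < l) (htu : t * u ≡ 1 [MOD 2 * l]) (hk : 1 ≤ k) :
    ((2 * rpT l u k - 1) * t : ℤ) ≡ sigmaT l u k * (2 * k - 1) [ZMOD 2 * l] := by
  have hu : u.Coprime (2 * l) := Nat.coprime_of_mul_modEq_one t (mul_comm t u ▸ htu)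
  have hmod := modEq_sigmaT_mul_rpT hl (Nat.coprime_two_right.1 hu.coprime_mul_right_right) hk
  have htu' : (t * u : ℤ) ≡ 1 [ZMOD 2 * l] := by exact_mod_cast Int.natCast_modEq_iff.2 htu
  have hsq : sigmaT l u k * sigmaT l u k = 1 := Int.isUnit_mul_self (isUnit_sigmaT l u k)
  calc ((2 * rpT l u k - 1) * t : ℤ)
      = sigmaT l u k * t * (sigmaT l u k * (2 * rpT l u k - 1)) := by
        linear_combination (-(2 * rpT l u k - 1) * t : ℤ) * hsq
    _ ≡ sigmaT l u k * t * ((2 * k - 1) * u) [ZMOD 2 * l] := hmod.symm.mul_left _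
    _ = sigmaT l u k * (2 * k - 1) * (t * u) := by ring
    _ ≡ sigmaT l u k * (2 * k - 1) * 1 [ZMOD 2 * l] := htu'.mul_left _
    _ = sigmaT l u k * (2 * k - 1) := mul_one _

lemma rpT_mem_Icc_of_mul_modEq_one (hl : Odd l) (htu : t * u ≡ 1 [MOD 2 * l])
    (hk : k ∈ Icc 1 ((l - 1) / 2)) : rpT l u k ∈ Icc 1 ((l - 1) / 2) :=
  rpT_mem_Icc hl (Nat.coprime_of_mul_modEq_one t (mul_comm t u ▸ htu)) hk

lemma rpT_rpT (hl : Odd l) (htu : t * u ≡ 1 [MOD 2 * l]) (hk : k ∈ Icc 1 ((l - 1) / 2)) :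
    rpT l t (rpT l u k) = k := by
  have hrpT := mem_Icc.1 (rpT_mem_Icc_of_mul_modEq_one hl htu hk)
  obtain ⟨hk1, hkl⟩ := mem_Icc.1 hk
  exact rpT_eq_of_modEq (isUnit_sigmaT l u k) hrpT.1 hk1 (by omega) (rpT_mul_modEq hl.pos htu hk1)

lemma sigmaT_rpT (hl : Odd l) (htu : t * u ≡ 1 [MOD 2 * l]) (hk : k ∈ Icc 1 ((l - 1) / 2)) :
    sigmaT l t (rpT l u k) = sigmaT l u k := by
  have hrpT := mem_Icc.1 (rpT_mem_Icc_of_mul_modEq_one hl htu hk)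
  obtain ⟨hk1, hkl⟩ := mem_Icc.1 hk
  exact sigmaT_eq_of_modEq (isUnit_sigmaT l u k) hrpT.1 hk1 (by omega)
    (rpT_mul_modEq hl.pos htu hk1)

lemma iT_spec (h : ∃ j ∈ Icc 1 ((l - 1) / 2), rpT l t j = k) :
    iT l t k ∈ Icc 1 ((l - 1) / 2) ∧ rpT l t (iT l t k) = k := by
  rw [iT, dif_pos h]
  exact h.choose_spec

lemma iT_eq_rpT (hl : Odd l) (htu : t * u ≡ 1 [MOD 2 * l]) (hk : k ∈ Icc 1 ((l - 1) / 2)) :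
    iT l t k = rpT l u k := by
  obtain ⟨hmem, hrpT⟩ := iT_spec
    ⟨rpT l u k, rpT_mem_Icc_of_mul_modEq_one hl htu hk, rpT_rpT hl htu hk⟩
  rw [← rpT_rpT hl (mul_comm t u ▸ htu) hmem, hrpT]

theorem sigmaT_iT (hl : Odd l) (htu : t * u ≡ 1 [MOD 2 * l]) (hk : k ∈ Icc 1 ((l - 1) / 2)) :
    sigmaT l t (iT l t k) = sigmaT l u k := by
  rw [iT_eq_rpT hl htu hk, sigmaT_rpT hl htu hk]

end

lemma sub_two_mul_mul_add_two_mul_modEq_one {m : ℕ} (hm : 0 < m) (p : ℕ) :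
    (4 * m * p - 2 * p + 1) * (4 * m * p + 1 + 2 * m) ≡ 1 [MOD 2 * (4 * m * p + 1)] := by
  have hle : 2 * p ≤ 4 * m * p := Nat.mul_le_mul_right p (by omega)
  rw [Nat.modEq_iff_dvd]
  push_cast [hle]
  exact ⟨p - m - 2 * m * p, by ring⟩

lemma mul_div_mul_add_one_eq {a b n s : ℕ} (hs : s ≤ b) (hlo : a * s + 1 ≤ n)
    (hhi : n ≤ a * (s + 1)) : n * b / (a * b + 1) = s := by
  apply Nat.div_eq_of_lt_le
  · calc s * (a * b + 1) = a * s * b + s := by ring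
      _ ≤ a * s * b + b := by gcongr
      _ = (a * s + 1) * b := by ring
      _ ≤ n * b := by gcongr
  · calc n * b ≤ a * (s + 1) * b := by gcongr
      _ < a * (s + 1) * b + (s + 1) := by omega
      _ = (s + 1) * (a * b + 1) := by ring

/-- Lemma 2.4(iii): for `l = 4mp+1`, `t = 4mp-2p+1`, `σ_(i_k)` alternates between
`-1` and `1` on successive intervals of length `p`, starting with `-1`. -/
theorem sigma_iT_formula_neg_pos
    (m p s k : ℕ) (hm : 0 < m) (hp : 0 < p)
    (hs : s ≤ 2 * m - 1) (hk1 : s * p + 1 ≤ k) (hk2 : k ≤ (s + 1) * p) :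
    sigmaT (4 * m * p + 1) (4 * m * p - 2 * p + 1) (iT (4 * m * p + 1) (4 * m * p - 2 * p + 1) k) = (-1 : ℤ) ^ (s + 1) := by
  have hl : Odd (4 * m * p + 1) := ⟨2 * m * p, by ring⟩
  have hkl : k ∈ Icc 1 ((4 * m * p + 1 - 1) / 2) := by
    have hkp : k ≤ 2 * m * p := hk2.trans (Nat.mul_le_mul_right p (by omega))
    rw [mem_Icc, Nat.add_sub_cancel, Nat.le_div_iff_mul_le two_pos]
    exact ⟨by omega, by linarith⟩
  have hfloor : (2 * k - 1) * (2 * m) / (4 * m * p + 1) = s := by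
    rw [show 4 * m * p = 2 * p * (2 * m) by ring]
    exact mul_div_mul_add_one_eq (by omega) (by grind) (by grind)
  rw [sigmaT_iT hl (sub_two_mul_mul_add_two_mul_modEq_one hm p) hkl,
    sigmaT_add_left hl.pos _ (mem_Icc.1 hkl).1, sigmaT, hfloor, pow_succ, mul_neg_one]

end
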